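/- For every function f on the hypercube {0,1}^n and every p ∈ [0,1), the expectation over ρ ~ R_p of DL(f↾ρ) is at most DL(f)^{γ(p)}, where γ(p) = log_{2/(1-p)}((1+p)/(1-p)). -/

import Mathlib

noncomputable def rpWeight {n : ℕ} (p : ℝ) (ρ : Fin n → Option Bool) : ℝ :=
  ∏ i, if ρ i = none then p else (1 - p) / 2

def restrictFun {n : ℕ} {V : Type} (f : (Fin n → Bool) → V) (ρ : Fin n → Option Bool) :
    (Fin n → Bool) → V :=
  fun x => f (fun i => (ρ i).getD (x i))

/-- `x` satisfies the conjunctive clause `C` (`C i = some b` means the literal `x i = b`). -/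
def clauseSat {n : ℕ} (C : Fin n → Option Bool) (x : Fin n → Bool) : Prop :=
  ∀ i : Fin n, ∀ b : Bool, C i = some b → x i = b

/-- The decision list `L` computes `f`: on each input `x` some clause is satisfied
(so the clauses form a tautology), and `f x` is the output of the first satisfied clause. -/
def DLcomputes {n : ℕ} {V : Type} (L : List ((Fin n → Option Bool) × V))
    (f : (Fin n → Bool) → V) : Prop :=
  ∀ x, ∃ k : Fin L.length, clauseSat (L.get k).1 x ∧
    (∀ j : Fin L.length, j < k → ¬ clauseSat (L.get j).1 x) ∧ f x = (L.get k).2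

/-- `DL(f)`: minimum size of a decision list computing `f`. -/
noncomputable def DLsize {n : ℕ} {V : Type} (f : (Fin n → Bool) → V) : ℕ :=
  sInf {m | ∃ L : List ((Fin n → Option Bool) × V), DLcomputes L f ∧ L.length = m}

theorem aux_split {ι α : Type} [Fintype ι] [DecidableEq ι] [Fintype α] (S : ι → Prop)
    [DecidablePred S]
    (w0 : ι → α → ℝ) (G : (ι → α) → ℝ)
    (hG : ∀ ρ σ : ι → α, (∀ i, ¬ S i → ρ i = σ i) → G ρ = G σ) [Nonempty α] :
    ∃ K : ℝ, ∀ w : ι → α → ℝ, (∀ i, ¬ S i → w i = w0 i) →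
      ∑ ρ : ι → α, (∏ i, w i (ρ i)) * G ρ = (∏ i : {i // S i}, ∑ a, w i a) * K := by
  let e := Equiv.piEquivPiSubtypeProd S (fun _ : ι => α)
  let a0 : {i // S i} → α := fun _ => Classical.arbitrary α
  refine ⟨∑ τ : {i // ¬ S i} → α, (∏ i : {i // ¬ S i}, w0 i (τ i)) * G (e.symm (a0, τ)), ?_⟩
  intro w hw
  rw [← e.symm.sum_comp, Fintype.sum_prod_type, Finset.prod_univ_sum, Fintype.piFinset_univ,
    Finset.sum_mul]
  refine Finset.sum_congr rfl fun σ _ => ?_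
  rw [Finset.mul_sum]
  refine Finset.sum_congr rfl fun τ _ => ?_
  rw [← Fintype.prod_subtype_mul_prod_subtype S, mul_assoc]
  congr 1
  · refine Finset.prod_congr rfl fun i _ => ?_
    simp [e, i.2]
  · congr 1
    · refine Finset.prod_congr rfl fun i _ => ?_
      rw [hw i i.2]
      simp [e, i.2]
    · apply hG
      intro i hi
      simp [e, hi]

theorem aux_DLsize_le {n : ℕ} {V : Type} (f : (Fin n → Bool) → V) (N : ℕ)
    (c : Fin N → (Fin n → Option Bool) × V)
    (h : ∀ x, ∃ k, clauseSat (c k).1 x ∧ (∀ j, j < k → ¬ clauseSat (c j).1 x) ∧ f x = (c k).2) :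
    ∃ L : List ((Fin n → Option Bool) × V), DLcomputes L f ∧ L.length = N := by
  refine ⟨List.ofFn c, ?_, List.length_ofFn⟩
  intro x
  obtain ⟨k, h1, h2, h3⟩ := h x
  refine ⟨Fin.cast List.length_ofFn.symm k, ?_, ?_, ?_⟩
  · simpa using h1
  · intro j hj
    have := h2 (Fin.cast List.length_ofFn j) (by
      simpa [Fin.lt_def] using hj)
    rw [List.get_ofFn]
    exact this
  · simpa using h3

theorem aux_exists {n : ℕ} {V : Type} (f : (Fin n → Bool) → V) :
    ∃ L : List ((Fin n → Option Bool) × V), DLcomputes L f ∧ L.length = DLsize f := by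
  have : {m | ∃ L : List ((Fin n → Option Bool) × V), DLcomputes L f ∧ L.length = m}.Nonempty := by
    let e := Fintype.equivFin (Fin n → Bool)
    refine ⟨_, aux_DLsize_le f _ (fun k => (fun i => some (e.symm k i), f (e.symm k))) ?_⟩
    intro x
    refine ⟨e x, ?_, ?_, ?_⟩
    · intro i b hb
      simpa using hb
    · intro j hj hs
      have : x = e.symm j := by
        funext i
        exact hs i _ rfl
      rw [this] at hj
      simp at hj
    · simp
  exact Nat.sInf_mem this

def auxFirst {n m : ℕ} (c : Fin m → Fin n → Option Bool) (k : Fin m) (x : Fin n → Bool) : Prop :=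
  clauseSat (c k) x ∧ ∀ j, j < k → ¬ clauseSat (c j) x

def auxUseful {n m : ℕ} (c : Fin m → Fin n → Option Bool) (k : Fin m)
    (ρ : Fin n → Option Bool) : Prop :=
  ∃ x, auxFirst c k x ∧ clauseSat ρ x

open Classical in
theorem aux_restrict {n m : ℕ} {V : Type} (f : (Fin n → Bool) → V)
    (c : Fin m → Fin n → Option Bool) (v : Fin m → V)
    (h : ∀ x, ∃ k, auxFirst c k x ∧ f x = v k) (ρ : Fin n → Option Bool) :
    DLsize (restrictFun f ρ) ≤ (Finset.univ.filter fun k => auxUseful c k ρ).card := by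
  set U := Finset.univ.filter fun k => auxUseful c k ρ with hU
  let e := U.orderIsoOfFin rfl
  refine Nat.sInf_le (aux_DLsize_le _ _
    (fun a => (fun i => if ρ i = none then c (e a) i else none, v (e a))) ?_)
  intro x
  set y : Fin n → Bool := fun i => (ρ i).getD (x i) with hy
  have hρy : clauseSat ρ y := by
    intro i b hb
    simp [hy, hb]
  have key : ∀ k, k ∈ U →
      (clauseSat (fun i => if ρ i = none then c k i else none) x ↔ clauseSat (c k) y) := by
    intro k hk
    rw [hU, Finset.mem_filter] at hk
    obtain ⟨_, z, ⟨hz, _⟩, hz2⟩ := hk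
    constructor
    · intro hs i b hb
      cases hi : ρ i with
      | none =>
        have := hs i b (by simp [hi, hb])
        simp [hy, hi, this]
      | some b' =>
        have h1 := hz i b hb
        have h2 := hz2 i b' hi
        simp [hy, hi, ← h1, ← h2]
    · intro hs i b hb
      cases hi : ρ i with
      | none =>
        simp [hi] at hb
        have := hs i b hb
        simpa [hy, hi] using this
      | some b' => simp [hi] at hb
  obtain ⟨k, hk, hfk⟩ := h y
  have hkU : k ∈ U := by
    rw [hU, Finset.mem_filter]
    exact ⟨Finset.mem_univ _, y, hk, hρy⟩
  refine ⟨e.symm ⟨k, hkU⟩, ?_, ?_, ?_⟩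
  · simp only [OrderIso.apply_symm_apply]
    exact (key k hkU).2 hk.1
  · intro j hj hs
    have h1 := (key (e j) (e j).2).1 hs
    refine hk.2 _ ?_ h1
    have := (OrderIso.lt_symm_apply e).1 hj
    exact this
  · simp only [OrderIso.apply_symm_apply]
    exact hfk

theorem aux_weight_nonneg {n : ℕ} {p : ℝ} (hp0 : 0 ≤ p) (hp1 : p < 1) (ρ : Fin n → Option Bool) :
    0 ≤ rpWeight p ρ := by
  unfold rpWeight
  refine Finset.prod_nonneg fun i _ => ?_
  split_ifs
  · exact hp0
  · linarith

theorem aux_weight_sum {n : ℕ} (p : ℝ) : ∑ ρ : Fin n → Option Bool, rpWeight p ρ = 1 := by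
  unfold rpWeight
  have := Finset.prod_univ_sum (fun _ : Fin n => (Finset.univ : Finset (Option Bool)))
    (fun _ a => if a = none then p else (1 - p) / 2)
  rw [Fintype.piFinset_univ] at this
  rw [← this]
  refine Finset.prod_eq_one fun i _ => ?_
  simp [Fintype.sum_option]
  ring

open Classical in
theorem aux_prob {n m : ℕ} (c : Fin m → Fin n → Option Bool) (k : Fin m) (p : ℝ)
    (hp0 : 0 ≤ p) (hp1 : p < 1) :
    ∃ (s : ℕ) (K : ℝ), 0 ≤ K ∧ K ≤ 1 ∧
      ∑ ρ : Fin n → Option Bool, rpWeight p ρ * (if auxUseful c k ρ then 1 else 0)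
        = (1 - (1 - p) / 2) ^ s * K ∧
      ∑ ρ : Fin n → Option Bool, rpWeight p ρ *
        (if (∀ i, c k i ≠ none → ρ i = c k i) ∧ auxUseful c k ρ then 1 else 0)
        = ((1 - p) / 2) ^ s * K := by
  let Q : (Fin n → Option Bool) → Prop := fun ρ =>
    ∃ x, auxFirst c k x ∧ ∀ i, c k i = none → ∀ b, ρ i = some b → x i = b
  let w0 : Fin n → Option Bool → ℝ := fun _ a => if a = none then p else (1 - p) / 2
  obtain ⟨K, hK⟩ := aux_split (fun i => c k i ≠ none) w0 (fun ρ => if Q ρ then 1 else 0) (by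
    intro ρ σ h
    have : Q ρ ↔ Q σ := by
      refine exists_congr fun x => and_congr_right fun _ => forall_congr' fun i => ?_
      refine imp_congr_right fun hi => ?_
      rw [h i (by simpa using hi)]
    simp only [this])
  have hsum : ∀ i : {i // c k i ≠ none}, ∑ a, w0 i a = 1 := by
    intro i
    simp [w0, Fintype.sum_option]
    ring
  have h0 := hK w0 (fun _ _ => rfl)
  rw [Finset.prod_eq_one (fun i _ => hsum i), one_mul] at h0
  have hU : ∀ ρ, auxUseful c k ρ ↔
      ((∀ i, c k i = none ∨ ρ i = none ∨ ρ i = c k i) ∧ Q ρ) := by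
    intro ρ
    constructor
    · rintro ⟨x, hx, hρ⟩
      refine ⟨fun i => ?_, x, hx, fun i _ => hρ i⟩
      cases h1 : c k i with
      | none => simp
      | some b =>
        cases h2 : ρ i with
        | none => simp
        | some b' =>
          have := hx.1 i b h1
          have := hρ i b' h2
          simp_all
    · rintro ⟨h, x, hx, hρ⟩
      refine ⟨x, hx, fun i b hb => ?_⟩
      rcases h i with h | h | h
      · exact hρ i h b hb
      · simp [h] at hb
      · exact hx.1 i b (h ▸ hb)
  have hE : ∀ ρ, ((∀ i, c k i ≠ none → ρ i = c k i) ∧ auxUseful c k ρ) ↔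
      ((∀ i, c k i = none ∨ ρ i = c k i) ∧ Q ρ) := by
    intro ρ
    rw [hU]
    constructor
    · rintro ⟨h1, h2, h3⟩
      exact ⟨fun i => or_iff_not_imp_left.2 (h1 i), h3⟩
    · rintro ⟨h1, h3⟩
      exact ⟨fun i => or_iff_not_imp_left.1 (h1 i), fun i => (h1 i).imp_right Or.inr, h3⟩
  refine ⟨Fintype.card {i // c k i ≠ none}, K, ?_, ?_, ?_, ?_⟩
  · rw [← h0]
    refine Finset.sum_nonneg fun ρ _ => mul_nonneg (aux_weight_nonneg hp0 hp1 ρ) ?_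
    split_ifs <;> norm_num
  · rw [← h0]
    refine le_trans ?_ (aux_weight_sum (n := n) p).le
    refine Finset.sum_le_sum fun ρ _ => mul_le_of_le_one_right (aux_weight_nonneg hp0 hp1 ρ) ?_
    split_ifs <;> norm_num
  · have h1 := hK (fun i a => if c k i = none ∨ a = none ∨ a = c k i then w0 i a else 0) (by
      intro i hi
      funext a
      have hi : c k i = none := by simpa using hi
      simp [hi])
    rw [Finset.prod_congr rfl (g := fun _ => 1 - (1 - p) / 2), Finset.prod_const,
      Finset.card_univ] at h1
    · rw [← h1]
      refine Finset.sum_congr rfl fun ρ _ => ?_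
      rw [Finset.prod_ite_zero]
      simp only [hU ρ, Finset.mem_univ, true_implies]
      by_cases hA : ∀ i, c k i = none ∨ ρ i = none ∨ ρ i = c k i
      · simp only [hA, implies_true, true_and, if_true]; rfl
      · simp only [hA, false_and, if_false, mul_zero, zero_mul]
    · intro i _
      obtain ⟨i, hi⟩ := i
      obtain ⟨b, hb⟩ := Option.ne_none_iff_exists'.1 hi
      cases b <;> simp [w0, Fintype.sum_option, hb] <;> ring
  · have h1 := hK (fun i a => if c k i = none ∨ a = c k i then w0 i a else 0) (by
      intro i hi
      funext a
      have hi : c k i = none := by simpa using hi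
      simp [hi])
    rw [Finset.prod_congr rfl (g := fun _ => (1 - p) / 2), Finset.prod_const,
      Finset.card_univ] at h1
    · rw [← h1]
      refine Finset.sum_congr rfl fun ρ _ => ?_
      rw [Finset.prod_ite_zero]
      simp only [hE ρ, Finset.mem_univ, true_implies]
      by_cases hA : ∀ i, c k i = none ∨ ρ i = c k i
      · simp only [hA, implies_true, true_and, if_true]; rfl
      · simp only [hA, false_and, if_false, mul_zero, zero_mul]
    · intro i _
      obtain ⟨i, hi⟩ := i
      obtain ⟨b, hb⟩ := Option.ne_none_iff_exists'.1 hi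
      cases b <;> simp [w0, Fintype.sum_option, hb]

theorem aux_jensen {m : ℕ} (hm : 0 < m) (a : Fin m → ℝ) (ha : ∀ k, 0 ≤ a k) (hs : ∑ k, a k ≤ 1)
    (θ : ℝ) (h0 : 0 ≤ θ) (h1 : θ ≤ 1) : ∑ k, a k ^ θ ≤ (m : ℝ) ^ (1 - θ) := by
  have hm' : (0 : ℝ) < m := by exact_mod_cast hm
  have := (Real.concaveOn_rpow h0 h1).le_map_sum (t := Finset.univ) (w := fun _ : Fin m => (m : ℝ)⁻¹)
    (p := a) (fun _ _ => by positivity) (by simp [hm'.ne']) (fun k _ => ha k)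
  simp only [smul_eq_mul, ← Finset.mul_sum] at this
  have h2 : ((m : ℝ)⁻¹ * ∑ k, a k) ^ θ ≤ ((m : ℝ)⁻¹) ^ θ := by
    apply Real.rpow_le_rpow
    · exact mul_nonneg (by positivity) (Finset.sum_nonneg fun k _ => ha k)
    · exact mul_le_of_le_one_right (by positivity) hs
    · exact h0
  have h3 := this.trans h2
  rw [inv_mul_le_iff₀ hm', Real.inv_rpow hm'.le] at h3
  rwa [Real.rpow_sub hm', Real.rpow_one, div_eq_mul_inv]

/-- Shrinkage of decision lists: `E[DL(f↾R_p)] ≤ DL(f)^{γ(p)}`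
with `γ(p) = log_{2/(1-p)}((1+p)/(1-p))`. -/
theorem dl_shrinkage {n : ℕ} {V : Type} (f : (Fin n → Bool) → V) (p : ℝ)
    (hp0 : 0 ≤ p) (hp1 : p < 1) :
    ∑ ρ : Fin n → Option Bool, rpWeight p ρ * (DLsize (restrictFun f ρ) : ℝ)
      ≤ (DLsize f : ℝ) ^ Real.logb (2 / (1 - p)) ((1 + p) / (1 - p)) := by
  classical
  obtain ⟨L, hL, hlen⟩ := aux_exists f
  rw [← hlen]
  let c : Fin L.length → Fin n → Option Bool := fun k => (L.get k).1
  let v : Fin L.length → V := fun k => (L.get k).2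
  have h : ∀ x, ∃ k, auxFirst c k x ∧ f x = v k := by
    intro x
    obtain ⟨k, h1, h2, h3⟩ := hL x
    exact ⟨k, ⟨h1, h2⟩, h3⟩
  have hm : 0 < L.length := by
    obtain ⟨k, _⟩ := h (fun _ => false)
    exact k.pos
  set q : ℝ := (1 - p) / 2 with hq
  have hq0 : 0 < q := by rw [hq]; linarith
  have hq1 : q ≤ 1 - q := by rw [hq]; linarith
  have hq2 : q < 1 := by rw [hq]; linarith
  set θ : ℝ := Real.logb q (1 - q) with hθ
  have hqθ : q ^ θ = 1 - q := Real.rpow_logb hq0 hq2.ne (by linarith)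
  have hθ0 : 0 ≤ θ := Real.logb_nonneg_of_base_lt_one hq0 hq2 (by linarith) (by linarith)
  have hθ1 : θ ≤ 1 := by
    by_contra hc
    push Not at hc
    have := Real.rpow_lt_rpow_of_exponent_gt hq0 hq2 hc
    rw [hqθ, Real.rpow_one] at this
    linarith
  have hγ : Real.logb (2 / (1 - p)) ((1 + p) / (1 - p)) = 1 - θ := by
    have e1 : 2 / (1 - p) = q⁻¹ := by rw [hq, inv_div]
    have e2 : (1 + p) / (1 - p) = (1 - q) / q := by
      have : 1 - p ≠ 0 := by linarith
      rw [hq]; field_simp; ring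
    have hlq : Real.log q ≠ 0 := (Real.log_neg hq0 hq2).ne
    rw [e1, e2, hθ, Real.logb, Real.logb, Real.log_inv, Real.log_div (by linarith) hq0.ne']
    field_simp
    ring
  rw [hγ]
  let a : Fin L.length → ℝ := fun k => ∑ ρ : Fin n → Option Bool, rpWeight p ρ *
        (if (∀ i, c k i ≠ none → ρ i = c k i) ∧ auxUseful c k ρ then 1 else 0)
  have ha : ∀ k, 0 ≤ a k := fun k => Finset.sum_nonneg fun ρ _ =>
    mul_nonneg (aux_weight_nonneg hp0 hp1 ρ) (by split_ifs <;> norm_num)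
  have hsum : ∑ k, a k ≤ 1 := by
    simp only [a]
    rw [Finset.sum_comm]
    refine le_trans ?_ (aux_weight_sum (n := n) p).le
    refine Finset.sum_le_sum fun ρ _ => ?_
    rw [← Finset.mul_sum]
    refine mul_le_of_le_one_right (aux_weight_nonneg hp0 hp1 ρ) ?_
    rw [Finset.sum_boole]
    norm_cast
    rw [Finset.card_le_one]
    have disj : ∀ k l : Fin L.length, (∀ i, c k i ≠ none → ρ i = c k i) →
        auxUseful c l ρ → ¬ k < l := by
      rintro k l h1 ⟨x, hx, hρ⟩ hlt
      refine hx.2 k hlt fun i b hb => hρ i b ?_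
      rw [h1 i (by simp [hb]), hb]
    intro k hk l hl
    rw [Finset.mem_filter] at hk hl
    exact le_antisymm (not_lt.1 (disj l k hl.2.1 hk.2.2)) (not_lt.1 (disj k l hk.2.1 hl.2.2))
  refine le_trans ?_ (aux_jensen hm a ha hsum θ hθ0 hθ1)
  calc ∑ ρ : Fin n → Option Bool, rpWeight p ρ * (DLsize (restrictFun f ρ) : ℝ)
      ≤ ∑ ρ : Fin n → Option Bool, rpWeight p ρ *
          ∑ k, (if auxUseful c k ρ then (1 : ℝ) else 0) := by
        refine Finset.sum_le_sum fun ρ _ =>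
          mul_le_mul_of_nonneg_left ?_ (aux_weight_nonneg hp0 hp1 ρ)
        rw [Finset.sum_boole]
        exact_mod_cast aux_restrict f c v h ρ
    _ = ∑ k, ∑ ρ : Fin n → Option Bool, rpWeight p ρ *
          (if auxUseful c k ρ then (1 : ℝ) else 0) := by
        rw [Finset.sum_comm]
        simp only [Finset.mul_sum]
    _ ≤ ∑ k, a k ^ θ := by
        refine Finset.sum_le_sum fun k _ => ?_
        obtain ⟨s, K, hK0, hK1, h1, h2⟩ := aux_prob c k p hp0 hp1
        simp only [a]
        rw [h1, h2, ← hq, Real.mul_rpow (by positivity) hK0, ← Real.rpow_natCast q s,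
          ← Real.rpow_mul hq0.le, mul_comm (s : ℝ) θ, Real.rpow_mul hq0.le, hqθ,
          Real.rpow_natCast]
        refine mul_le_mul_of_nonneg_left ?_ (pow_nonneg (by linarith) _)
        exact Real.self_le_rpow_of_le_one hK0 hK1 hθ1
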